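/- arXiv:1906.05204 — 2 statements merged into one kernel-verified Lean document; each statement's English description precedes it below -/
import Mathlib

section
/- Let G : ℝ → ℝ be convex and let Y₀ ≤ y₀ ≤ Y₁ ≤ Y₂ ≤ … ≤ Y_r ≤ y* ≤ Y_{r+1} be real numbers (r ≥ 0). Suppose 0 is a subgradient of G at y₀, for each k = 1,…,r+1 the number U_k is a subgradient of G at Y_k, and U₁ ≥ 0. Then G(y*) − G(y₀) ≤ Σ_{k=1}^{r} U_k·(Y_k − Y_{k−1}) + U_{r+1}·(y* − Y_r). -/
/-! Each bracket contributes one tangent-line inequality: a subgradient at the right endpoint bounds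
the increment of the function over the bracket, and these bounds telescope. The last bracket is
truncated at `y*`, where no subgradient is known; convexity bounds the increment over an initial
part of a segment by the same part of the full increment. Finally, the unknown starting point `y₀`
may be moved back to `Y 0` because the slope of the first bracket is nonnegative. -/

section Subgradient

variable {𝕜 E : Type*} [CommRing 𝕜] [LinearOrder 𝕜] [IsStrictOrderedRing 𝕜]
  [AddCommGroup E] [Module 𝕜 E] {s : Set E} {f : E → 𝕜} {φ : Module.Dual 𝕜 E} {a b c : E}

/-- The linear functional `φ` is a subgradient at `c` of the restriction of `f` to `s`: the affine
function through `(c, f c)` with slope `φ` lies below `f` on `s`. As for `IsMinOn`, the point `c`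
is not required to belong to `s`. -/
def IsSubgradientOn (f : E → 𝕜) (s : Set E) (φ : Module.Dual 𝕜 E) (c : E) : Prop :=
  ∀ z ∈ s, f c + φ (z - c) ≤ f z

namespace IsSubgradientOn

lemma sub_le (hφ : IsSubgradientOn f s φ c) (ha : a ∈ s) : f c - f a ≤ φ (c - a) := by
  have h := hφ a ha
  rw [← neg_sub c a, map_neg] at h
  linarith

lemma sub_le_of_mem_segment (hφ : IsSubgradientOn f s φ c) (hf : ConvexOn 𝕜 s f)
    (ha : a ∈ s) (hc : c ∈ s) (hb : b ∈ segment 𝕜 a c) : f b - f a ≤ φ (b - a) := by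
  obtain ⟨p, t, hp, ht, hpt, rfl⟩ := hb
  obtain rfl : p = 1 - t := eq_sub_of_add_eq hpt
  have hconv : f ((1 - t) • a + t • c) ≤ (1 - t) * f a + t * f c := hf.2 ha hc hp ht hpt
  calc f ((1 - t) • a + t • c) - f a
      ≤ t * (f c - f a) := by linarith
    _ ≤ t * φ (c - a) := mul_le_mul_of_nonneg_left (hφ.sub_le ha) ht
    _ = φ (t • (c - a)) := by rw [map_smul, smul_eq_mul]
    _ = φ ((1 - t) • a + t • c - a) := by congr 1; module

variable {r : ℕ} {x : ℕ → E} {Φ : ℕ → Module.Dual 𝕜 E}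

lemma sub_le_sum_range (hΦ : ∀ k < r, IsSubgradientOn f s (Φ k) (x (k + 1)))
    (hx : ∀ k < r, x k ∈ s) :
    f (x r) - f (x 0) ≤ ∑ k ∈ Finset.range r, Φ k (x (k + 1) - x k) := by
  rw [← Finset.sum_range_sub (fun k ↦ f (x k))]
  refine Finset.sum_le_sum fun k hk ↦ ?_
  rw [Finset.mem_range] at hk
  exact (hΦ k hk).sub_le (hx k hk)

lemma sub_le_sum_range_add (hΦ : ∀ k ≤ r, IsSubgradientOn f s (Φ k) (x (k + 1)))
    (hf : ConvexOn 𝕜 s f) (hx : ∀ k ≤ r + 1, x k ∈ s)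
    (hb : b ∈ segment 𝕜 (x r) (x (r + 1))) :
    f b - f (x 0) ≤ ∑ k ∈ Finset.range r, Φ k (x (k + 1) - x k) + Φ r (b - x r) := by
  have hchain := sub_le_sum_range (fun k hk ↦ hΦ k hk.le) (fun k hk ↦ hx k (by omega))
  have hlast := (hΦ r le_rfl).sub_le_of_mem_segment hf (hx r (by omega)) (hx (r + 1) le_rfl) hb
  linarith

end IsSubgradientOn

end Subgradient

theorem stmt_6_general {𝕜 : Type*} [Field 𝕜] [LinearOrder 𝕜] [IsStrictOrderedRing 𝕜]
    {s : Set 𝕜} {G : 𝕜 → 𝕜} (hG : ConvexOn 𝕜 s G) {r : ℕ} {Y U : ℕ → 𝕜} {y₀ ystar : 𝕜}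
    (hy₀s : y₀ ∈ s) (hYs : ∀ k, 1 ≤ k → k ≤ r + 1 → Y k ∈ s) (hY0 : Y 0 ≤ y₀)
    (hYr : Y r ≤ ystar) (hstarY : ystar ≤ Y (r + 1)) (hy₀star : y₀ ≤ ystar)
    (hU : ∀ k, 1 ≤ k → k ≤ r + 1 → ∀ z ∈ s, G (Y k) + U k * (z - Y k) ≤ G z)
    (hU1 : 0 ≤ U 1) :
    G ystar - G y₀ ≤
      (∑ k ∈ Finset.Icc 1 r, U k * (Y k - Y (k - 1))) + U (r + 1) * (ystar - Y r) := by
  let x : ℕ → 𝕜 := Function.update Y 0 y₀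
  have hxs : ∀ k ≤ r + 1, x k ∈ s
    | 0, _ => hy₀s
    | k + 1, hk => hYs (k + 1) k.succ_pos hk
  have hsub : ∀ k ≤ r, IsSubgradientOn G s (LinearMap.mulLeft 𝕜 (U (k + 1))) (x (k + 1)) :=
    fun k hk ↦ hU (k + 1) k.succ_pos (Nat.succ_le_succ hk)
  have hxr : x r ≤ ystar := by cases r <;> assumption
  have hmove : ∀ k v, U (k + 1) * (v - x k) ≤ U (k + 1) * (v - Y k)
    | 0, _ => mul_le_mul_of_nonneg_left (sub_le_sub_left hY0 _) hU1
    | _ + 1, _ => le_rfl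
  calc G ystar - G y₀
      ≤ ∑ k ∈ Finset.range r, U (k + 1) * (Y (k + 1) - x k) + U (r + 1) * (ystar - x r) :=
        IsSubgradientOn.sub_le_sum_range_add hsub hG hxs (Icc_subset_segment ⟨hxr, hstarY⟩)
    _ ≤ ∑ k ∈ Finset.range r, U (k + 1) * (Y (k + 1) - Y k) + U (r + 1) * (ystar - Y r) :=
        add_le_add (Finset.sum_le_sum fun k _ ↦ hmove k _) (hmove r _)
    _ = ∑ k ∈ Finset.Icc 1 r, U k * (Y k - Y (k - 1)) + U (r + 1) * (ystar - Y r) := by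
        rw [← Finset.Ico_add_one_right_eq_Icc, Finset.sum_Ico_eq_sum_range]
        simp only [Nat.add_sub_cancel, Nat.add_comm 1]

/-- Data-driven bracketing estimate: given `Y 0 ≤ y₀ ≤ Y 1 ≤ ⋯ ≤ Y r ≤ y* ≤ Y (r+1)`, with `0`
a subgradient of the convex `G` at `y₀`, `U k` a subgradient at `Y k` for `k = 1,…,r+1`, and
`U 1 ≥ 0`, one has `G y* - G y₀ ≤ ∑_{k=1}^r U k (Y k - Y (k-1)) + U (r+1) (y* - Y r)`. -/
theorem stmt_6 (G : ℝ → ℝ) (hG : ConvexOn ℝ Set.univ G)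
    (r : ℕ) (Y U : ℕ → ℝ) (y₀ ystar : ℝ)
    (hY0 : Y 0 ≤ y₀) (hy₀Y1 : y₀ ≤ Y 1)
    (hchain : ∀ k, 1 ≤ k → k < r → Y k ≤ Y (k + 1))
    (hYr : Y r ≤ ystar) (hstarY : ystar ≤ Y (r + 1)) (hy₀star : y₀ ≤ ystar)
    (h0 : ∀ z : ℝ, G y₀ ≤ G z)
    (hU : ∀ k, 1 ≤ k → k ≤ r + 1 → ∀ z : ℝ, G (Y k) + U k * (z - Y k) ≤ G z)
    (hU1 : 0 ≤ U 1) :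
    G ystar - G y₀ ≤
      (∑ k ∈ Finset.Icc 1 r, U k * (Y k - Y (k - 1))) + U (r + 1) * (ystar - Y r) :=
  stmt_6_general hG (Set.mem_univ _) (fun _ _ _ ↦ Set.mem_univ _) hY0 hYr hstarY hy₀star
    (fun k hk hkr z _ ↦ hU k hk hkr z) hU1
end

section
/- Let F, h : ℝ → ℝ be continuous and strictly increasing, and assume that lim_{|x|→∞} |F(x)| = ∞ or lim_{|x|→∞} |h(x)| = ∞. Define the relation R = {(F(σ), h(σ)) : σ ∈ ℝ} ⊆ ℝ². Then: (i) R is monotone, i.e. for any (u₁, y₁), (u₂, y₂) ∈ R, u₁ < u₂ implies y₁ ≤ y₂; and (ii) R is maximally monotone, i.e. for any point (u, y) ∈ ℝ² such that R ∪ {(u, y)} is monotone, one has (u, y) ∈ R. -/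
/-- A subset `A ⊆ ℝ²` is a monotone relation if `u₁ < u₂` implies `y₁ ≤ y₂` for any
`(u₁, y₁), (u₂, y₂) ∈ A`. -/
def MonotoneRel (A : Set (ℝ × ℝ)) : Prop :=
  ∀ p ∈ A, ∀ q ∈ A, p.1 < q.1 → p.2 ≤ q.2

/-!
This is Minty's criterion in dimension one. On a monotone relation the map `(u, y) ↦ u + y` is
injective, because along it `y` cannot decrease while `u` increases. Hence a monotone relation on
which this map takes every real value has no room for another point. For `R` the values are those
of `F + h`, which is onto by the intermediate value theorem: one of the two monotone summands is
unbounded in both directions and the other one cannot compensate.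
-/

open Filter Set

namespace MonotoneRel

variable {A B : Set (ℝ × ℝ)}

theorem injOn_add (hA : MonotoneRel A) : InjOn (fun p : ℝ × ℝ ↦ p.1 + p.2) A := by
  intro p hp q hq (hpq : p.1 + p.2 = q.1 + q.2)
  have hle : p.1 ≤ q.1 := not_lt.1 fun hlt ↦ by linarith [hA q hq p hp hlt]
  have hge : q.1 ≤ p.1 := not_lt.1 fun hlt ↦ by linarith [hA p hp q hq hlt]
  exact Prod.ext (le_antisymm hle hge) (by linarith)

theorem subset_of_surjOn_add (hB : MonotoneRel B) (hAB : A ⊆ B)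
    (hA : SurjOn (fun p : ℝ × ℝ ↦ p.1 + p.2) A univ) : B ⊆ A := by
  intro p hp
  obtain ⟨q, hq, hqp⟩ := hA (mem_univ (p.1 + p.2))
  exact hB.injOn_add (hAB hq) hp hqp ▸ hq

end MonotoneRel

section Surjectivity

variable {α G : Type*} [AddCommGroup G] [LinearOrder G] [IsOrderedAddMonoid G]

theorem tendsto_atTop_of_tendsto_abs_of_eventually_ge {l : Filter α} {f : α → G} {c : G}
    (habs : Tendsto (fun x ↦ |f x|) l atTop) (hc : ∀ᶠ x in l, c ≤ f x) :
    Tendsto f l atTop := by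
  refine tendsto_atTop.2 fun b ↦ ?_
  filter_upwards [hc, habs.eventually_ge_atTop b, habs.eventually_ge_atTop (-(c + c))]
    with x hcx hb hcc
  rcases abs_cases (f x) with ⟨habs_eq, -⟩ | ⟨habs_eq, hneg⟩
  · exact habs_eq ▸ hb
  · have hlt : c + c < f x := (add_lt_of_neg_left c (hcx.trans_lt hneg)).trans_le hcx
    exact absurd (neg_le_neg_iff.1 (habs_eq ▸ hcc)) hlt.not_ge

theorem tendsto_atBot_of_tendsto_abs_of_eventually_le {l : Filter α} {f : α → G} {c : G}
    (habs : Tendsto (fun x ↦ |f x|) l atTop) (hc : ∀ᶠ x in l, f x ≤ c) :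
    Tendsto f l atBot :=
  tendsto_neg_atTop_iff.1 <| tendsto_atTop_of_tendsto_abs_of_eventually_ge (c := -c)
    (by simpa only [abs_neg] using habs) (hc.mono fun _ ↦ neg_le_neg)

variable [ConditionallyCompleteLinearOrder α] [TopologicalSpace α] [OrderTopology α]
  [DenselyOrdered α] [Nonempty α] [NoMaxOrder α] [NoMinOrder α]
  [TopologicalSpace G] [OrderClosedTopology G]

theorem surjective_add_of_tendsto_abs_cocompact {f g : α → G} (hf : Monotone f) (hg : Monotone g)
    (hfg : Continuous (f + g)) (habs : Tendsto (fun x ↦ |f x|) (cocompact α) atTop) :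
    Function.Surjective (f + g) := by
  obtain ⟨a⟩ := ‹Nonempty α›
  have f_atTop : Tendsto f atTop atTop :=
    tendsto_atTop_of_tendsto_abs_of_eventually_ge (habs.mono_left atTop_le_cocompact)
      ((eventually_ge_atTop a).mono fun _ hx ↦ hf hx)
  have f_atBot : Tendsto f atBot atBot :=
    tendsto_atBot_of_tendsto_abs_of_eventually_le (habs.mono_left atBot_le_cocompact)
      ((eventually_le_atBot a).mono fun _ hx ↦ hf hx)
  exact hfg.surjective
    (tendsto_atTop_add_right_of_le' _ (g a) f_atTop ((eventually_ge_atTop a).mono fun _ hx ↦ hg hx))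
    (tendsto_atBot_add_right_of_ge' _ (g a) f_atBot ((eventually_le_atBot a).mono fun _ hx ↦ hg hx))

end Surjectivity

theorem stmt_8_general {ι : Type*} [LinearOrder ι] {F h : ι → ℝ} (hF : Monotone F)
    (hh : Monotone h) (hsurj : Function.Surjective (F + h)) :
    MonotoneRel {p : ℝ × ℝ | ∃ σ : ι, p = (F σ, h σ)} ∧
      ∀ u y : ℝ, MonotoneRel ({p : ℝ × ℝ | ∃ σ : ι, p = (F σ, h σ)} ∪ {(u, y)}) →
        (u, y) ∈ {p : ℝ × ℝ | ∃ σ : ι, p = (F σ, h σ)} := by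
  constructor
  · rintro _ ⟨a, rfl⟩ _ ⟨b, rfl⟩ hab
    exact hh (hF.reflect_lt hab).le
  · intro u y hmono
    refine hmono.subset_of_surjOn_add subset_union_left (fun c _ ↦ ?_) (Or.inr rfl)
    obtain ⟨σ, hσ⟩ := hsurj c
    exact ⟨(F σ, h σ), ⟨σ, rfl⟩, hσ⟩

/-- For `F, h : ℝ → ℝ` continuous and strictly increasing with `|F| → ∞` or `|h| → ∞` as
`|x| → ∞`, the relation `R = {(F σ, h σ) : σ ∈ ℝ}` is monotone and maximally monotone. -/
theorem stmt_8 (F h : ℝ → ℝ) (hFc : Continuous F) (hFmono : StrictMono F)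
    (hhc : Continuous h) (hhmono : StrictMono h)
    (hinf : Filter.Tendsto (fun x => |F x|) (Filter.cocompact ℝ) Filter.atTop ∨
      Filter.Tendsto (fun x => |h x|) (Filter.cocompact ℝ) Filter.atTop) :
    MonotoneRel {p : ℝ × ℝ | ∃ σ : ℝ, p = (F σ, h σ)} ∧
      ∀ u y : ℝ, MonotoneRel ({p : ℝ × ℝ | ∃ σ : ℝ, p = (F σ, h σ)} ∪ {(u, y)}) →
        (u, y) ∈ {p : ℝ × ℝ | ∃ σ : ℝ, p = (F σ, h σ)} :=
  stmt_8_general hFmono.monotone hhmono.monotone <| hinf.elim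
    (surjective_add_of_tendsto_abs_cocompact hFmono.monotone hhmono.monotone (hFc.add hhc))
    (add_comm h F ▸
      surjective_add_of_tendsto_abs_cocompact hhmono.monotone hFmono.monotone (hhc.add hFc))
end
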